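/- arXiv:2310.15932 — 6 statements merged into one kernel-verified Lean document; each statement's English description precedes it below -/
import Mathlib

section
/- There exists a universal constant K > 0 such that the following holds. Let d, T be positive integers, C₀ > 0, let s₁ ≥ s₂ ≥ … ≥ s_T be real numbers, and let μ_{t,l} ∈ ℝ^d be vectors defined for all 1 ≤ l ≤ t ≤ T. Suppose that for all 1 ≤ t < t′ ≤ T one has Σ_{l=1}^{t} ‖μ_{t,l} − μ_{t′,l}‖₂² ≤ C₀·(s_t − s_{t′}). Then for all 1 ≤ a ≤ b ≤ T, Σ_{t=a}^{b} ‖μ_{t,t} − μ_{b,t}‖₂² ≤ K·C₀·(log(1+b−a))²·(s_a − s_b); in particular Σ_{t=1}^{T} ‖μ_{t,t} − μ_{T,t}‖₂² ≤ K·C₀·(log(1+T))²·(s₁ − s_T). -/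
open scoped BigOperators

lemma rh_sq_add {E : Type*} [NormedAddCommGroup E] (x y z : E) (k : ℝ) (hk : 0 ≤ k) :
    ‖x - z‖ ^ 2 ≤ (k + 2) / (k + 1) * ‖x - y‖ ^ 2 + (k + 2) * ‖y - z‖ ^ 2 := by
  have h : ‖x - z‖ ≤ ‖x - y‖ + ‖y - z‖ := norm_sub_le_norm_sub_add_norm_sub x y z
  have h1 : ‖x - z‖ ^ 2 ≤ (‖x - y‖ + ‖y - z‖) ^ 2 := by gcongr
  refine h1.trans ?_
  generalize ‖x - y‖ = p
  generalize ‖y - z‖ = q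
  have hk1 : 0 < k + 1 := by linarith
  have : (k + 2) / (k + 1) * p ^ 2 + (k + 2) * q ^ 2 - (p + q) ^ 2
      = (p - (k + 1) * q) ^ 2 / (k + 1) := by
    field_simp
    ring
  have h2 : 0 ≤ (p - (k + 1) * q) ^ 2 / (k + 1) := by positivity
  linarith

lemma rh_aux {E : Type*} [NormedAddCommGroup E] (T : ℕ) (C₀ : ℝ) (hC : 0 < C₀) (s : ℕ → ℝ)
    (hs : ∀ t t', 1 ≤ t → t ≤ t' → t' ≤ T → s t' ≤ s t) (μ : ℕ → ℕ → E)
    (hμ : ∀ t t', 1 ≤ t → t < t' → t' ≤ T →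
          ∑ l ∈ Finset.Icc 1 t, ‖μ t l - μ t' l‖ ^ 2 ≤ C₀ * (s t - s t')) (k : ℕ) :
    ∀ a b, 1 ≤ a → a ≤ b → b ≤ T → b + 1 ≤ a + 2 ^ k →
      ∑ t ∈ Finset.Icc a b, ‖μ t t - μ b t‖ ^ 2 ≤ k * (k + 1) * C₀ * (s a - s b) := by
  induction k with
  | zero =>
    intro a b _ h1 _ h2
    obtain rfl : a = b := by simp at h2; omega
    simp
  | succ k ih =>
    intro a b ha hab hb hn
    rcases hab.eq_or_lt with rfl | hlt
    · simp
    rw [pow_succ] at hn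
    obtain ⟨m, hm⟩ : ∃ m, m = (a + b) / 2 := ⟨_, rfl⟩
    have i1 := ih a m ha (by omega) (by omega) (by omega)
    have i2 := ih (m + 1) b (by omega) (by omega) hb (by omega)
    have h3 := hμ m b (by omega) (by omega) hb
    have h4 : ∑ l ∈ Finset.Icc a m, ‖μ m l - μ b l‖ ^ 2 ≤ C₀ * (s m - s b) :=
      le_trans (Finset.sum_le_sum_of_subset_of_nonneg
        (Finset.Icc_subset_Icc_left ha) (fun _ _ _ => by positivity)) h3
    have s1 := hs a m ha (by omega) (by omega)
    have s2 := hs m (m + 1) (by omega) (by omega) (by omega)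
    have s3 := hs (m + 1) b (by omega) (by omega) hb
    have hsplit : ∑ t ∈ Finset.Icc a b, ‖μ t t - μ b t‖ ^ 2 =
        ∑ t ∈ Finset.Icc a m, ‖μ t t - μ b t‖ ^ 2 +
        ∑ t ∈ Finset.Icc (m + 1) b, ‖μ t t - μ b t‖ ^ 2 := by
      rw [← Finset.sum_union]
      · congr 1
        ext x
        simp only [Finset.mem_union, Finset.mem_Icc]
        omega
      · rw [Finset.disjoint_left]
        intro x
        simp only [Finset.mem_Icc]
        omega
    have hk0 : (0 : ℝ) ≤ k := Nat.cast_nonneg k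
    have h5 : ∑ t ∈ Finset.Icc a m, ‖μ t t - μ b t‖ ^ 2 ≤
        ((k : ℝ) + 2) / (k + 1) * ∑ t ∈ Finset.Icc a m, ‖μ t t - μ m t‖ ^ 2 +
        ((k : ℝ) + 2) * ∑ t ∈ Finset.Icc a m, ‖μ m t - μ b t‖ ^ 2 := by
      rw [Finset.mul_sum, Finset.mul_sum, ← Finset.sum_add_distrib]
      exact Finset.sum_le_sum fun t _ => rh_sq_add _ _ _ _ hk0
    have h6 : ((k : ℝ) + 2) / (k + 1) * ∑ t ∈ Finset.Icc a m, ‖μ t t - μ m t‖ ^ 2 ≤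
        k * (k + 2) * (C₀ * (s a - s m)) := by
      calc _ ≤ ((k : ℝ) + 2) / (k + 1) * (k * (k + 1) * C₀ * (s a - s m)) := by gcongr
        _ = _ := by field_simp
    have h7 : ((k : ℝ) + 2) * ∑ t ∈ Finset.Icc a m, ‖μ m t - μ b t‖ ^ 2 ≤
        (k + 2) * (C₀ * (s m - s b)) := by gcongr
    have h8 : (k : ℝ) * (k + 1) * C₀ * (s (m + 1) - s b) ≤
        k * (k + 1) * (C₀ * (s m - s b)) := by
      rw [mul_assoc]
      gcongr
    have p1 : 0 ≤ C₀ * (s a - s m) := mul_nonneg hC.le (by linarith)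
    have p2 : 0 ≤ C₀ * (s m - s b) := mul_nonneg hC.le (by linarith)
    have e : ((k + 1 : ℕ) : ℝ) * ((k + 1 : ℕ) + 1) * C₀ * (s a - s b) =
        k * (k + 2) * (C₀ * (s a - s m)) + (k + 2) * (C₀ * (s m - s b)) +
        k * (k + 1) * (C₀ * (s m - s b)) +
        (k + 2) * (C₀ * (s a - s m)) + k * (C₀ * (s m - s b)) := by
      push_cast
      ring
    have q1 : 0 ≤ ((k : ℝ) + 2) * (C₀ * (s a - s m)) := by positivity
    have q2 : 0 ≤ (k : ℝ) * (C₀ * (s m - s b)) := by positivity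
    rw [hsplit, e]
    linarith

lemma rh_log (n : ℕ) (hn : 2 ≤ n) :
    ∃ k : ℕ, n ≤ 2 ^ k ∧ (k : ℝ) * (k + 1) ≤ 32 * Real.log n ^ 2 := by
  obtain ⟨j, hj⟩ : ∃ j, j = Nat.log 2 n := ⟨_, rfl⟩
  have h1 : 2 ^ j ≤ n := hj ▸ Nat.pow_log_le_self 2 (by omega)
  have h2 : n < 2 ^ (j + 1) := hj ▸ Nat.lt_pow_succ_log_self (by norm_num) n
  have hj1 : 1 ≤ j := hj ▸ Nat.log_pos (by norm_num) hn
  refine ⟨j + 1, h2.le, ?_⟩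
  have h3 : (j : ℝ) * Real.log 2 ≤ Real.log n := by
    rw [← Real.log_pow]
    exact Real.log_le_log (by positivity) (by exact_mod_cast h1)
  have h4 := Real.log_two_gt_d9
  have hj2 : (1 : ℝ) ≤ j := by exact_mod_cast hj1
  have h5 : (j : ℝ) / 2 ≤ Real.log n := by nlinarith
  have h6 : ((j : ℝ) / 2) ^ 2 ≤ Real.log n ^ 2 := by gcongr
  push_cast
  nlinarith

/-- The recursive halving inequality underlying the analysis of the online filter: if the
pairwise aggregated differences of the vectors `μ t l` are controlled by the decrease of a
monotone sequence `s`, then the per-round outputs `μ t t` cannot drift far from the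
final-round values `μ b t`, up to a squared-logarithmic factor. -/
theorem recursive_halving_bound :
    ∃ K : ℝ, 0 < K ∧
      ∀ (d T : ℕ), 0 < d → 0 < T →
      ∀ C₀ : ℝ, 0 < C₀ →
      ∀ s : ℕ → ℝ, (∀ t t', 1 ≤ t → t ≤ t' → t' ≤ T → s t' ≤ s t) →
      ∀ μ : ℕ → ℕ → EuclideanSpace ℝ (Fin d),
        (∀ t t', 1 ≤ t → t < t' → t' ≤ T →
          ∑ l ∈ Finset.Icc 1 t, ‖μ t l - μ t' l‖ ^ 2 ≤ C₀ * (s t - s t')) →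
        (∀ a b, 1 ≤ a → a ≤ b → b ≤ T →
          ∑ t ∈ Finset.Icc a b, ‖μ t t - μ b t‖ ^ 2 ≤
            K * C₀ * (Real.log (1 + (b : ℝ) - (a : ℝ))) ^ 2 * (s a - s b)) ∧
        (∑ t ∈ Finset.Icc 1 T, ‖μ t t - μ T t‖ ^ 2 ≤
            K * C₀ * (Real.log (1 + (T : ℝ))) ^ 2 * (s 1 - s T)) := by
  refine ⟨32, by norm_num, ?_⟩
  intro d T _ hT C₀ hC s hs μ hμ
  have main : ∀ a b, 1 ≤ a → a ≤ b → b ≤ T →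
          ∑ t ∈ Finset.Icc a b, ‖μ t t - μ b t‖ ^ 2 ≤
            32 * C₀ * (Real.log (1 + (b : ℝ) - (a : ℝ))) ^ 2 * (s a - s b) := by
    intro a b ha hab hb
    rcases hab.eq_or_lt with rfl | hlt
    · simp
    obtain ⟨k, hk1, hk2⟩ := rh_log (1 + b - a) (by omega)
    rw [Nat.cast_sub (by omega)] at hk2
    push_cast at hk2
    refine (rh_aux T C₀ hC s hs μ hμ k a b ha hab hb (by omega)).trans ?_
    have h0 : 0 ≤ s a - s b := sub_nonneg.2 (hs a b ha hab hb)
    have h1 : (k : ℝ) * (k + 1) * C₀ ≤ 32 * C₀ * (Real.log (1 + (b : ℝ) - (a : ℝ))) ^ 2 := by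
      nlinarith
    gcongr
  refine ⟨main, (main 1 T le_rfl hT le_rfl).trans ?_⟩
  have h0 : 0 ≤ s 1 - s T := sub_nonneg.2 (hs 1 T le_rfl hT le_rfl)
  have hT1 : (1 : ℝ) ≤ T := by exact_mod_cast hT
  have e : 1 + (T : ℝ) - ((1 : ℕ) : ℝ) = T := by push_cast; ring
  rw [e]
  have h1 : 0 ≤ Real.log T := Real.log_nonneg hT1
  have h2 : Real.log T ≤ Real.log (1 + (T : ℝ)) := Real.log_le_log (by linarith) (by linarith)
  gcongr
end

section
/- There exist universal constants ε₀ ∈ (0,1) and c > 0 such that the following holds. Let ε ∈ (0, ε₀), γ ∈ (0,1), T ≥ 1 an integer, and μ* ∈ [γ/4, 3γ/4]. Let S be a finite set partitioned into an adversarial subset A and a clean subset S∖A, with binary labels x_j ∈ {0,1} for j ∈ S, and suppose S_L := {j ∈ S : x_j = 1} and S_R := {j ∈ S : x_j = 0} are both nonempty. Define ε_S = |A|/|S|, μ̂ = (1/|S∖A|) Σ_{j∈S∖A} x_j, μ̃ = (1/|S|) Σ_{j∈S} x_j, μ̄ = min(γ, μ̃), ε_L = |A∩S_L|/|S_L|,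 ε_R = |A∩S_R|/|S_R|. Assume ε_S ≤ 10ε, |μ̂ − μ*| ≤ min(ε,γ)/T, and η := |μ̄ − μ*| ≥ 2·min(ε,γ)/T. Then: if |S_L|/|S| ≤ 5γ, we have |ε_L − ε_R| ≥ c·η·|S|/|S_L|; and if |S_L|/|S| > 5γ, we have |ε_L − ε_R| ≥ c. -/
open scoped BigOperators Classical

/-- If a group estimate is far from the true mean, the adversarial samples must be split very
unevenly between the two child groups. Here `S` is a group with adversarial subset `A`,
binary labels `x j ∈ {0,1}` split it into `S_L` (label 1) and `S_R` (label 0), `μ̂` is the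
clean empirical mean, `μ̄` the `γ`-capped group mean, and `ε_L, ε_R` the adversarial
densities of the child groups. -/
theorem uneven_adversarial_split :
    ∃ ε₀ c : ℝ, ε₀ ∈ Set.Ioo (0 : ℝ) 1 ∧ 0 < c ∧
      ∀ (ι : Type) (S A : Finset ι) (x : ι → ℝ) (ε γ μstar : ℝ) (T : ℕ),
        0 < ε → ε < ε₀ → γ ∈ Set.Ioo (0 : ℝ) 1 → 1 ≤ T →
        μstar ∈ Set.Icc (γ / 4) (3 * γ / 4) →
        A ⊆ S →
        (∀ j ∈ S, x j = 0 ∨ x j = 1) →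
        ∀ SL SR : Finset ι,
          SL = S.filter (fun j => x j = 1) →
          SR = S.filter (fun j => x j = 0) →
          SL.Nonempty → SR.Nonempty →
        ∀ εS μhat μtilde μbar εL εR η : ℝ,
          εS = (A.card : ℝ) / (S.card : ℝ) →
          μhat = (1 / (((S \ A).card : ℝ))) * ∑ j ∈ S \ A, x j →
          μtilde = (1 / (S.card : ℝ)) * ∑ j ∈ S, x j →
          μbar = min γ μtilde →
          εL = ((A ∩ SL).card : ℝ) / (SL.card : ℝ) →
          εR = ((A ∩ SR).card : ℝ) / (SR.card : ℝ) →
          η = |μbar - μstar| →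
          εS ≤ 10 * ε →
          |μhat - μstar| ≤ min ε γ / T →
          2 * min ε γ / T ≤ η →
          (((SL.card : ℝ) / (S.card : ℝ) ≤ 5 * γ →
              c * η * (S.card : ℝ) / (SL.card : ℝ) ≤ |εL - εR|) ∧
           (5 * γ < (SL.card : ℝ) / (S.card : ℝ) →
              c ≤ |εL - εR|)) := by
  refine ⟨1/20, 1/4, by norm_num, by norm_num, ?_⟩
  intro ι S A x ε γ μs T hε hε0 hγ hT hμ hA hx SL SR hSL hSR hL hR
    εS μh μt μb εL εR η h1 h2 h3 h4 h5 h6 h7 h8 h9 h10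
  have key : ∀ B : Finset ι, B ⊆ S → ∑ j ∈ B, x j = ((B ∩ SL).card : ℝ) := by
    intro B hB
    have e : B ∩ SL = B.filter (fun j => x j = 1) := by
      ext j; simp only [hSL, Finset.mem_inter, Finset.mem_filter]
      exact ⟨fun h => ⟨h.1, h.2.2⟩, fun h => ⟨h.1, hB h.1, h.2⟩⟩
    rw [e, Finset.card_filter, Nat.cast_sum]
    refine Finset.sum_congr rfl fun j hj => ?_
    rcases hx j (hB hj) with h | h <;> simp [h]
  have card : ∀ B : Finset ι, B ⊆ S → (B.card : ℝ) = ((B ∩ SL).card : ℝ) + ((B ∩ SR).card : ℝ) := by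
    intro B hB
    rw [← Nat.cast_add, ← Finset.card_union_of_disjoint]
    · congr 2
      ext j
      simp only [hSL, hSR, Finset.mem_inter, Finset.mem_filter, Finset.mem_union]
      constructor
      · intro h
        rcases hx j (hB h) with h' | h'
        · exact Or.inr ⟨h, hB h, h'⟩
        · exact Or.inl ⟨h, hB h, h'⟩
      · rintro (h | h) <;> exact h.1
    · rw [Finset.disjoint_left]
      intro j h h'
      simp only [hSL, hSR, Finset.mem_inter, Finset.mem_filter] at h h'
      linarith [h.2.2, h'.2.2]
  have eSL : S ∩ SL = SL := Finset.inter_eq_right.2 (by rw [hSL]; exact Finset.filter_subset _ _)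
  have eSR : S ∩ SR = SR := Finset.inter_eq_right.2 (by rw [hSR]; exact Finset.filter_subset _ _)
  have cS := card S subset_rfl
  have cA := card A hA
  have kS := key S subset_rfl
  have kA := key A hA
  have kd : ∑ j ∈ S \ A, x j = ∑ j ∈ S, x j - ∑ j ∈ A, x j := by
    rw [← Finset.sum_sdiff hA]; ring
  have cd : ((S \ A).card : ℝ) = (S.card : ℝ) - A.card := by
    rw [Finset.card_sdiff_of_subset hA, Nat.cast_sub (Finset.card_le_card hA)]
  rw [eSL] at kS
  rw [eSL, eSR] at cS
  rw [kd, cd, kS, kA] at h2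
  rw [kS] at h3
  have hl : (0:ℝ) < SL.card := by exact_mod_cast hL.card_pos
  have hr : (0:ℝ) < SR.card := by exact_mod_cast hR.card_pos
  generalize (SL.card : ℝ) = l at *
  generalize (SR.card : ℝ) = r at *
  generalize (S.card : ℝ) = n at *
  generalize (A.card : ℝ) = a at *
  generalize ((A ∩ SL).card : ℝ) = aL at *
  generalize ((A ∩ SR).card : ℝ) = aR at *
  have hn : 0 < n := by linarith
  have ha : a ≤ n / 2 := by
    have : a / n ≤ 1/2 := by linarith
    rw [div_le_iff₀ hn] at this; linarith
  have hm : 0 < n - a := by linarith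
  have hD : (εL - εR) * (l * r) = (μt - μh) * (n * (n - a)) := by
    rw [h5, h6, h2, h3]
    field_simp
    rw [cA, cS]; ring
  have hD' : |εL - εR| * (l * r) = |μt - μh| * (n * (n - a)) := by
    rw [← abs_of_pos (mul_pos hl hr), ← abs_mul, hD, abs_mul, abs_of_pos (mul_pos hn hm)]
  have hD2 : |μt - μh| * n / 2 ≤ |εL - εR| * l := by
    have h0 : 0 ≤ |μt - μh| * n := by positivity
    have : (|μt - μh| * n / 2) * r ≤ (|εL - εR| * l) * r := by
      have e : (|εL - εR| * l) * r = (|μt - μh| * n) * (n - a) := by linarith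
      rw [e, div_mul_eq_mul_div, mul_div_assoc]
      apply mul_le_mul_of_nonneg_left _ h0
      linarith
    exact le_of_mul_le_mul_right this hr
  have hμt : μt * n = l := by rw [h3]; field_simp
  obtain ⟨hμ1, hμ2⟩ := hμ
  obtain ⟨hγ0, hγ1⟩ := hγ
  have hT' : (1:ℝ) ≤ T := by exact_mod_cast hT
  constructor
  · intro _
    have q1 : η ≤ |μt - μs| := by
      rw [h7, h4]
      rcases le_total γ μt with h | h
      · rw [min_eq_left h, abs_of_nonneg (by linarith), abs_of_nonneg (by linarith)]; linarith
      · rw [min_eq_right h]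
    have q2 : |μt - μs| ≤ |μt - μh| + |μh - μs| := abs_sub_le _ _ _
    have q3 : |μh - μs| ≤ η / 2 := by
      have : 2 * min ε γ / T = 2 * (min ε γ / T) := by ring
      linarith
    have q4 : η / 2 * n ≤ |μt - μh| * n := mul_le_mul_of_nonneg_right (by linarith) hn.le
    rw [div_le_iff₀ hl]; linarith
  · intro h
    have hp : l / n = μt := by rw [← hμt]; field_simp
    rw [hp] at h
    have q1 : min ε γ / T ≤ γ :=
      (div_le_self (le_min hε.le hγ0.le) hT').trans (min_le_right _ _)
    have q2 := (abs_le.1 (h9.trans q1)).2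
    have q3 : μt / 2 ≤ |μt - μh| := le_trans (by linarith) (le_abs_self _)
    have q4 := mul_le_mul_of_nonneg_right q3 hn.le
    have : 1/4 * l ≤ |εL - εR| * l := by linarith
    exact le_of_mul_le_mul_right this hl
end

section
/- There exist constants C > 0 and ε₀ ∈ (0,1) such that for all ε ∈ (0, ε₀) the following holds. Define F : [0, ∞) → [0,1] by F(q) = 1 for 0 ≤ q < √ε and F(q) = exp(−(q − √ε)²/2) for q ≥ √ε. Then ∫₀^∞ min(ε, √(ε · F(q))) dq ≤ C · ε · √(log(1/ε)). -/
open MeasureTheory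

/-- Pointwise tail bound. -/
lemma tail_pointwise (ε s q : ℝ) (h0 : 0 < ε) (h1 : ε < 1) (hs : 1 ≤ s)
    (hL : s ^ 2 = -Real.log ε) (hq : 1 + 4 * s < q) :
    Real.sqrt (ε * Real.exp (-(q - Real.sqrt ε) ^ 2 / 2)) ≤
      ε * Real.exp (1 + 4 * s) * Real.exp (-q) := by
  have hr : Real.sqrt ε ≤ 1 := by
    exact Real.sqrt_le_one.2 h1.le
  apply Real.sqrt_le_iff.2
  refine ⟨by positivity, ?_⟩
  have he : ε = Real.exp (-s ^ 2) := by
    rw [hL, neg_neg, Real.exp_log h0]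
  have hu : 4 * s + (q - (1 + 4 * s)) ≤ q - Real.sqrt ε := by linarith
  generalize Real.sqrt ε = r at *
  rw [he, ← Real.exp_add, ← Real.exp_add, ← Real.exp_add, ← Real.exp_nat_mul]
  apply Real.exp_le_exp.2
  push_cast
  obtain ⟨t, ht⟩ : ∃ t, t = q - (1 + 4 * s) := ⟨_, rfl⟩
  have ht0 : 0 < t := by linarith
  rw [← ht] at hu
  have h2 : (4 * s + t) ^ 2 ≤ (q - r) ^ 2 := by
    apply pow_le_pow_left₀ (by linarith) hu
  have h3 : t ≤ s * t := by nlinarith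
  have h4 : q = t + (1 + 4 * s) := by linarith
  nlinarith [sq_nonneg t, sq_nonneg s]

/-- The error integral `Q_{F,ε} = ∫₀^∞ min(ε, √(ε F(q))) dq` for the subgaussian tail-bound
function (with mean at most `√ε`) is `O(ε·√(log(1/ε)))`. -/
theorem subgaussian_tail_integral :
    ∃ C ε₀ : ℝ, 0 < C ∧ ε₀ ∈ Set.Ioo (0 : ℝ) 1 ∧
      ∀ ε : ℝ, ε ∈ Set.Ioo (0 : ℝ) ε₀ →
      ∀ F : ℝ → ℝ,
        (∀ q : ℝ, 0 ≤ q →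
          F q = if q < Real.sqrt ε then 1
            else Real.exp (-(q - Real.sqrt ε) ^ 2 / 2)) →
        ∫ q in Set.Ioi (0 : ℝ), min ε (Real.sqrt (ε * F q)) ≤
          C * ε * Real.sqrt (Real.log (1 / ε)) := by
  refine ⟨6, Real.exp (-1), by norm_num, ⟨Real.exp_pos _, by simp⟩, ?_⟩
  rintro ε ⟨h0, h1⟩ F hF
  have hlt : ε < 1 := h1.trans (by simp)
  have hlog : Real.log ε < -1 := (Real.log_lt_iff_lt_exp h0).2 h1
  have hl : Real.log (1 / ε) = -Real.log ε := by simp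
  rw [hl]
  obtain ⟨s, hsdef⟩ : ∃ s, s = Real.sqrt (-Real.log ε) := ⟨_, rfl⟩
  rw [← hsdef]
  have hL : s ^ 2 = -Real.log ε := by rw [hsdef]; exact Real.sq_sqrt (by linarith)
  have hs : 1 ≤ s := by rw [hsdef]; exact Real.one_le_sqrt.2 (by linarith)
  obtain ⟨T, hT⟩ : ∃ T, T = 1 + 4 * s := ⟨_, rfl⟩
  have hr : Real.sqrt ε ≤ 1 := by
    exact Real.sqrt_le_one.2 hlt.le
  let g1 : ℝ → ℝ := (Set.Ioc 0 T).indicator fun _ => ε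
  let g2 : ℝ → ℝ := (Set.Ioi T).indicator fun q => ε * Real.exp T * Real.exp (-q)
  have i1 : Integrable g1 := by
    apply IntegrableOn.integrable_indicator _ measurableSet_Ioc
    simp [integrableOn_const_iff]
  have i2 : Integrable g2 := by
    apply IntegrableOn.integrable_indicator _ measurableSet_Ioi
    exact (integrableOn_exp_neg_Ioi T).const_mul _
  have e1 : ∫ q, g1 q = T * ε := by
    rw [integral_indicator measurableSet_Ioc]
    simp
    left; linarith
  have e2 : ∫ q, g2 q = ε := by
    rw [integral_indicator measurableSet_Ioi, integral_const_mul, integral_exp_neg_Ioi,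
      mul_assoc, ← Real.exp_add]
    simp
  have n1 : ∀ q, 0 ≤ g1 q := fun q => Set.indicator_nonneg (fun _ _ => h0.le) q
  have n2 : ∀ q, 0 ≤ g2 q := fun q => Set.indicator_nonneg (fun _ _ => by positivity) q
  calc ∫ q in Set.Ioi (0 : ℝ), min ε (Real.sqrt (ε * F q))
      ≤ ∫ q in Set.Ioi (0 : ℝ), (g1 q + g2 q) := by
        apply integral_mono_of_nonneg
        · exact Filter.Eventually.of_forall fun q => le_min h0.le (Real.sqrt_nonneg _)
        · exact (i1.add i2).integrableOn
        · filter_upwards [ae_restrict_mem measurableSet_Ioi] with q hq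
          have hq : 0 < q := hq
          by_cases h : q ≤ T
          · have : g1 q = ε := Set.indicator_of_mem (Set.mem_Ioc.2 ⟨hq, h⟩) _
            have := n2 q
            have := min_le_left ε (Real.sqrt (ε * F q))
            linarith
          · push Not at h
            have e : g2 q = ε * Real.exp T * Real.exp (-q) :=
              Set.indicator_of_mem (Set.mem_Ioi.2 h) _
            have := n1 q
            have := min_le_right ε (Real.sqrt (ε * F q))
            have hp := tail_pointwise ε s q h0 hlt hs hL (hT ▸ h)
            rw [hF q hq.le, if_neg (by linarith)] at this ⊢
            rw [← hT] at hp
            linarith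
    _ ≤ ∫ q, (g1 q + g2 q) := by
        apply setIntegral_le_integral (i1.add i2)
        exact Filter.Eventually.of_forall fun q => add_nonneg (n1 q) (n2 q)
    _ = T * ε + ε := by rw [integral_add i1 i2, e1, e2]
    _ ≤ 6 * ε * s := by rw [hT]; nlinarith
end

section
/- There exists a universal constant κ > 0 such that for all positive integers m < T the following holds. For n = m, m+1, …, T let v_n ∈ ℝ^m be the vector whose j-th entry is 1/(n − j + 1), i.e., v_n = (1/n, 1/(n−1), …, 1/(n−m+1)). Then the m×m positive semidefinite matrix Σ_{n=m}^{T} v_n v_nᵀ satisfies Σ_{n=m}^{T} v_n v_nᵀ ≼ κ·I_m in the positive semidefinite (Loewner) order. -/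
open scoped BigOperators

lemma hil_aux (c N : ℕ) :
    ∑ i ∈ Finset.range N, 1 / (((i : ℝ) + c + 1) * √((i : ℝ) + 1)) ≤
      8 * √(N : ℝ) / (√((c : ℝ) + 1) * (√(N : ℝ) + √((c : ℝ) + 1))) := by
  induction N with
  | zero => simp
  | succ N ih =>
    rw [Finset.sum_range_succ]
    push_cast
    have hc0 : (0 : ℝ) ≤ c := Nat.cast_nonneg c
    have hN0 : (0 : ℝ) ≤ N := Nat.cast_nonneg N
    have hr : 0 < √((c : ℝ) + 1) := Real.sqrt_pos.2 (by positivity)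
    have hr2 : √((c : ℝ) + 1) ^ 2 = c + 1 := Real.sq_sqrt (by positivity)
    have hs : 0 < √((N : ℝ) + 1) := Real.sqrt_pos.2 (by positivity)
    have hs2 : √((N : ℝ) + 1) ^ 2 = N + 1 := Real.sq_sqrt (by positivity)
    have ht : 0 ≤ √(N : ℝ) := Real.sqrt_nonneg _
    have ht2 : √(N : ℝ) ^ 2 = N := Real.sq_sqrt (by positivity)
    have hts : √(N : ℝ) ≤ √((N : ℝ) + 1) := Real.sqrt_le_sqrt (by linarith)
    generalize √((c : ℝ) + 1) = r at *
    generalize √((N : ℝ) + 1) = s at *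
    generalize √(N : ℝ) = t at *
    have hd : s - t = 1 / (s + t) := by
      rw [eq_div_iff (by positivity)]; nlinarith
    have key : 1 / (((N : ℝ) + c + 1) * s) ≤ 8 * (1 / (s + t)) / ((s + r) * (t + r)) := by
      have e : 8 * (1 / (s + t)) / ((s + r) * (t + r)) = 8 / ((s + t) * ((s + r) * (t + r))) := by
        field_simp
      rw [e, div_le_div_iff₀ (by positivity) (by positivity)]
      have h1 : (s + r) * (t + r) ≤ 4 * (N + c + 1) := by
        nlinarith [sq_nonneg (s - r), mul_le_mul_of_nonneg_left hts (by positivity : 0 ≤ s + r)]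
      have h2 : s + t ≤ 2 * s := by linarith
      have h3 := mul_le_mul h2 h1 (by positivity) (by positivity)
      linarith
    have e2 : 8 * s / (r * (s + r)) = 8 * t / (r * (t + r)) + 8 * (s - t) / ((s + r) * (t + r)) := by
      field_simp
      ring
    rw [e2, hd]
    linarith

lemma hil (c N : ℕ) :
    ∑ i ∈ Finset.range N, 1 / (((i : ℝ) + c + 1)) * (1 / √((i : ℝ) + 1)) ≤
      8 * (1 / √((c : ℝ) + 1)) := by
  have h := hil_aux c N
  have hr : 0 < √((c : ℝ) + 1) := Real.sqrt_pos.2 (by positivity)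
  have ht : 0 ≤ √(N : ℝ) := Real.sqrt_nonneg _
  simp only [one_div_mul_one_div]
  refine h.trans ?_
  rw [mul_one_div, div_le_div_iff₀ (by positivity) hr]
  nlinarith

lemma schur {ι κ : Type*} (s : Finset ι) (t : Finset κ) (K : ι → κ → ℝ) (p : κ → ℝ) (q : ι → ℝ)
    (C : ℝ) (hC : 0 ≤ C)
    (hK : ∀ b ∈ s, ∀ j ∈ t, 0 ≤ K b j) (hp : ∀ j ∈ t, 0 < p j) 
    (h1 : ∀ b ∈ s, ∑ j ∈ t, K b j * p j ≤ C * q b)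
    (h2 : ∀ j ∈ t, ∑ b ∈ s, K b j * q b ≤ C * p j) (x : κ → ℝ) :
    ∑ b ∈ s, (∑ j ∈ t, K b j * x j) ^ 2 ≤ C ^ 2 * ∑ j ∈ t, x j ^ 2 := by
  calc _ ≤ ∑ b ∈ s, (C * q b) * ∑ j ∈ t, K b j * (x j ^ 2 / p j) := by
        refine Finset.sum_le_sum fun b hb => ?_
        have hnn : ∀ j ∈ t, 0 ≤ K b j * (x j ^ 2 / p j) := fun j hj =>
          mul_nonneg (hK b hb j hj) (div_nonneg (sq_nonneg _) (hp j hj).le)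
        refine (Finset.sum_sq_le_sum_mul_sum_of_sq_le_mul t (f := fun j => K b j * p j)
          (g := fun j => K b j * (x j ^ 2 / p j)) 
          (fun j hj => mul_nonneg (hK b hb j hj) (hp j hj).le) hnn ?_).trans ?_
        · intro j hj
          have := (hp j hj).ne'
          apply le_of_eq
          field_simp
        · exact mul_le_mul_of_nonneg_right (h1 b hb) (Finset.sum_nonneg hnn)
    _ = ∑ j ∈ t, C * (x j ^ 2 / p j) * ∑ b ∈ s, K b j * q b := by
        simp only [Finset.mul_sum]
        rw [Finset.sum_comm]
        exact Finset.sum_congr rfl fun j _ => Finset.sum_congr rfl fun b _ => by ring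
    _ ≤ ∑ j ∈ t, C * (x j ^ 2 / p j) * (C * p j) := by
        refine Finset.sum_le_sum fun j hj => mul_le_mul_of_nonneg_left (h2 j hj) ?_
        exact mul_nonneg hC (div_nonneg (sq_nonneg _) (hp j hj).le)
    _ = _ := by
        rw [Finset.mul_sum]
        refine Finset.sum_congr rfl fun j hj => ?_
        have := (hp j hj).ne'
        field_simp

lemma main_bound (m T : ℕ) (x : Fin m → ℝ) :
    ∑ n ∈ Finset.Icc m T, (∑ j : Fin m, 1 / ((n : ℝ) - (j : ℕ)) * x j) ^ 2 ≤
      8 ^ 2 * ∑ j : Fin m, x j ^ 2 := by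
  have hrev : ∀ j : Fin m, ((Fin.rev j : Fin m) : ℝ) = (m : ℝ) - (j : ℕ) - 1 := by
    intro j
    rw [Fin.val_rev, Nat.cast_sub (by omega)]; push_cast; ring
  have hI : Finset.Icc m T = Finset.Ico m (T + 1) := by ext; simp
  rw [hI, Finset.sum_Ico_eq_sum_range]
  have hx : ∀ k : ℕ, ∑ j : Fin m, 1 / (((m + k : ℕ) : ℝ) - (j : ℕ)) * x j =
      ∑ j : Fin m, 1 / ((j : ℝ) + k + 1) * x (Fin.rev j) := by
    intro k
    rw [← Equiv.sum_comp Fin.revPerm]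
    refine Finset.sum_congr rfl fun j _ => ?_
    simp only [Fin.revPerm_apply, hrev]
    push_cast
    congr 2
    ring
  have hx2 : ∑ j : Fin m, x j ^ 2 = ∑ j : Fin m, x (Fin.rev j) ^ 2 := by
    rw [← Equiv.sum_comp Fin.revPerm]; rfl
  simp only [hx]
  rw [hx2]
  refine schur (Finset.range (T + 1 - m)) Finset.univ
    (fun (k : ℕ) (j : Fin m) => 1 / ((j : ℝ) + k + 1)) (fun j => 1 / √((j : ℝ) + 1))
    (fun k => 1 / √((k : ℝ) + 1)) 8 (by norm_num) ?_ ?_ ?_ ?_ _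
  · intros; positivity
  · intros; positivity
  · intro k _
    have := hil k m
    rwa [Finset.sum_range] at this
  · intro j _
    have := hil j (T + 1 - m)
    simpa only [add_comm (j : ℝ)] using this

/-- The sum of the outer products of the vectors
`v_n = (1/n, 1/(n-1), …, 1/(n-m+1))`, `n = m, …, T`, is bounded above by a universal constant
multiple of the identity in the Loewner (positive semidefinite) order. -/
theorem outer_product_sum_bounded :
    ∃ κ : ℝ, 0 < κ ∧
      ∀ m T : ℕ, 0 < m → m < T →
        (κ • (1 : Matrix (Fin m) (Fin m) ℝ) -
          ∑ n ∈ Finset.Icc m T,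
            Matrix.vecMulVec (fun j : Fin m => 1 / ((n : ℝ) - (j : ℕ)))
              (fun j : Fin m => 1 / ((n : ℝ) - (j : ℕ)))).PosSemidef := by
  refine ⟨8 ^ 2, by norm_num, fun m T _ _ => ?_⟩
  refine Matrix.PosSemidef.of_dotProduct_mulVec_nonneg ?_ fun x => ?_
  · ext i j
    simp only [Matrix.conjTranspose_apply, Matrix.sub_apply, Matrix.smul_apply, Matrix.sum_apply,
      Matrix.vecMulVec_apply, star_trivial, Matrix.one_apply, eq_comm (a := i), mul_comm]
  · have h := main_bound m T x
    rw [Matrix.sub_mulVec, Matrix.smul_mulVec, Matrix.one_mulVec, Matrix.sum_mulVec,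
      dotProduct_sub, dotProduct_sum, sub_nonneg, star_trivial]
    refine le_trans (le_of_eq ?_) (h.trans (le_of_eq ?_))
    · refine Finset.sum_congr rfl fun n _ => ?_
      rw [Matrix.vecMulVec_mulVec, sq]
      simp only [dotProduct, Finset.sum_mul, Pi.smul_apply, MulOpposite.smul_eq_mul_unop,
        MulOpposite.unop_op]
      refine Finset.sum_congr rfl fun j _ => by ring
    · simp only [dotProduct, Finset.mul_sum, Pi.smul_apply, smul_eq_mul]
      refine Finset.sum_congr rfl fun j _ => by ring
end

section
/- There exists a universal constant C > 0 such that for every positive integer N, the N×N symmetric matrix A′ with entries A′_{i,j} = 1/max(i, j) has operator norm (largest eigenvalue) at most C. -/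
lemma row_aux (m : ℕ) (hm : 0 < m) (N : ℕ) :
    (N ≤ m → ∑ j ∈ Finset.range N, (1 : ℝ) / ((max m (j + 1) : ℕ) : ℝ) * (1 / √((j : ℝ) + 1))
      ≤ 2 * √(N : ℝ) / m) ∧
    (m ≤ N → ∑ j ∈ Finset.range N, (1 : ℝ) / ((max m (j + 1) : ℕ) : ℝ) * (1 / √((j : ℝ) + 1))
      ≤ 4 / √(m : ℝ) - 2 / √(N : ℝ)) := by
  have hm' : (0 : ℝ) < m := by exact_mod_cast hm
  have key : ∀ S : ℝ, S ≤ 2 * √(m : ℝ) / m → S ≤ 4 / √(m : ℝ) - 2 / √(m : ℝ) := by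
    intro S hS
    have hs : 0 < √(m : ℝ) := Real.sqrt_pos.mpr hm'
    have hq : √(m : ℝ) * √(m : ℝ) = m := Real.mul_self_sqrt hm'.le
    have : 2 * √(m : ℝ) / m = 4 / √(m : ℝ) - 2 / √(m : ℝ) := by
      rw [← sub_div, div_eq_div_iff hm'.ne' hs.ne']
      linarith
    linarith
  induction N with
  | zero =>
    refine ⟨fun _ => by simp, fun h => by omega⟩
  | succ N ih =>
    have hb : 0 < √((N : ℝ) + 1) := Real.sqrt_pos.mpr (by positivity)
    have hb2 : √((N : ℝ) + 1) ^ 2 = N + 1 := Real.sq_sqrt (by positivity)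
    have ha : 0 ≤ √(N : ℝ) := Real.sqrt_nonneg _
    have ha2 : √(N : ℝ) ^ 2 = N := Real.sq_sqrt (by positivity)
    have hab : √(N : ℝ) ≤ √((N : ℝ) + 1) := Real.sqrt_le_sqrt (by linarith)
    have first : N + 1 ≤ m →
        ∑ j ∈ Finset.range (N + 1), (1 : ℝ) / ((max m (j + 1) : ℕ) : ℝ) * (1 / √((j : ℝ) + 1))
          ≤ 2 * √((N + 1 : ℕ) : ℝ) / m := by
      intro h
      rw [Finset.sum_range_succ, max_eq_left h]
      have h1 := ih.1 (by omega)
      push_cast at h1 ⊢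
      set a := √(N : ℝ)
      set b := √((N : ℝ) + 1)
      have h2 : 1 / b ≤ 2 * (b - a) := by
        rw [div_le_iff₀ hb]
        nlinarith [sq_nonneg (b - a)]
      have h3 : (1 : ℝ) / m * (1 / b) ≤ 1 / m * (2 * (b - a)) :=
        mul_le_mul_of_nonneg_left h2 (by positivity)
      have h4 : (1 : ℝ) / m * (2 * (b - a)) = 2 * b / m - 2 * a / m := by ring
      linarith
    refine ⟨first, fun h => ?_⟩
    rcases Nat.eq_or_lt_of_le h with h | h
    · have h6 := first h.ge
      rw [← h] at h6 ⊢
      exact key _ h6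
    · have hN : m ≤ N := by omega
      rw [Finset.sum_range_succ, max_eq_right (by omega : m ≤ N + 1)]
      have h1 := ih.2 hN
      have ha' : 0 < √(N : ℝ) := Real.sqrt_pos.mpr (by exact_mod_cast (by omega : 0 < N))
      push_cast at h1 ⊢
      rw [← hb2, Real.sqrt_sq hb.le]
      set a := √(N : ℝ)
      set b := √((N : ℝ) + 1)
      have h2 : 1 / b ^ 2 * (1 / b) ≤ 2 / a - 2 / b := by
        rw [div_sub_div _ _ ha'.ne' hb.ne', div_mul_div_comm, div_le_div_iff₀ (by positivity) (by positivity)]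
        have e : (b - a) * (b + a) = 1 := by linarith
        have h0 : 0 ≤ b - a := by linarith
        have h5 : a ≤ 2 * b ^ 2 * (b - a) := by
          have : a * ((b - a) * (b + a)) ≤ 2 * b ^ 2 * (b - a) := by
            have : a * (b + a) ≤ 2 * b ^ 2 := by nlinarith
            nlinarith
          rwa [e, mul_one] at this
        nlinarith [mul_le_mul_of_nonneg_left h5 hb.le]
      linarith

lemma row_bound (N : ℕ) (i : Fin N) :
    ∑ j : Fin N, (1 : ℝ) / ((max ((i : ℕ) + 1) ((j : ℕ) + 1) : ℕ) : ℝ) * (1 / √((j : ℝ) + 1))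
      ≤ 4 * (1 / √((i : ℝ) + 1)) := by
  rw [Fin.sum_univ_eq_sum_range
    (fun j => (1 : ℝ) / ((max ((i : ℕ) + 1) (j + 1) : ℕ) : ℝ) * (1 / √((j : ℝ) + 1))) N]
  have h := (row_aux ((i : ℕ) + 1) (by omega) N).2 (by omega)
  have : 0 ≤ 2 / √(N : ℝ) := by positivity
  push_cast at h ⊢
  rw [mul_one_div]
  linarith


/-- The `N×N` matrix with entries `1/max(i,j)` (indices `1, …, N`) has operator norm bounded
by a universal constant: its action on Euclidean space satisfies `‖A'v‖ ≤ C‖v‖` for all `v`. -/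
theorem inv_max_matrix_norm_bounded :
    ∃ C : ℝ, 0 < C ∧
      ∀ N : ℕ, 0 < N →
        ∀ v : EuclideanSpace ℝ (Fin N),
          ‖Matrix.toEuclideanLin
              (Matrix.of fun i j : Fin N =>
                (1 : ℝ) / ((max ((i : ℕ) + 1) ((j : ℕ) + 1) : ℕ) : ℝ)) v‖ ≤ C * ‖v‖ := by
  refine ⟨4, by norm_num, fun N _ v => ?_⟩
  set a : Fin N → Fin N → ℝ := fun i j =>
    (1 : ℝ) / ((max ((i : ℕ) + 1) ((j : ℕ) + 1) : ℕ) : ℝ) with ha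
  set p : Fin N → ℝ := fun j => 1 / √((j : ℝ) + 1) with hp
  have a0 : ∀ i j, 0 ≤ a i j := fun i j => by simp only [ha]; positivity
  have p0 : ∀ j, 0 < p j := fun j => by simp only [hp]; positivity
  have asymm : ∀ i j, a i j = a j i := fun i j => by simp only [ha, max_comm]
  have hrow : ∀ i, ∑ j, a i j * p j ≤ 4 * p i := fun i => row_bound N i
  refine (sq_le_sq₀ (norm_nonneg _) (by positivity)).mp ?_
  rw [mul_pow, EuclideanSpace.norm_sq_eq, EuclideanSpace.norm_sq_eq]
  simp only [Real.norm_eq_abs, sq_abs]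
  have hcs : ∀ i, (∑ j, a i j * v j) ^ 2 ≤ 4 * p i * ∑ j, a i j * (v j ^ 2 / p j) := by
    intro i
    refine (Finset.sum_sq_le_sum_mul_sum_of_sq_eq_mul Finset.univ
      (f := fun j => a i j * p j) (g := fun j => a i j * (v j ^ 2 / p j)) ?_ ?_ ?_).trans ?_
    · exact fun j _ => mul_nonneg (a0 i j) (p0 j).le
    · exact fun j _ => mul_nonneg (a0 i j) (div_nonneg (sq_nonneg _) (p0 j).le)
    · intro j _
      have := (p0 j).ne'
      field_simp
    · exact mul_le_mul_of_nonneg_right (hrow i) (Finset.sum_nonneg fun j _ =>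
        mul_nonneg (a0 i j) (div_nonneg (sq_nonneg _) (p0 j).le))
  calc _ = ∑ i, (∑ j, a i j * v j) ^ 2 := by
        refine Finset.sum_congr rfl fun i _ => ?_
        rfl
    _ ≤ ∑ i, 4 * p i * ∑ j, a i j * (v j ^ 2 / p j) := Finset.sum_le_sum fun i _ => hcs i
    _ = ∑ j, 4 * (v j ^ 2 / p j) * ∑ i, a j i * p i := by
        simp only [Finset.mul_sum]
        rw [Finset.sum_comm]
        refine Finset.sum_congr rfl fun j _ => Finset.sum_congr rfl fun i _ => ?_
        rw [asymm i j]; ring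
    _ ≤ ∑ j, 4 * (v j ^ 2 / p j) * (4 * p j) := Finset.sum_le_sum fun j _ =>
        mul_le_mul_of_nonneg_left (hrow j)
          (mul_nonneg (by norm_num) (div_nonneg (sq_nonneg _) (p0 j).le))
    _ = 4 ^ 2 * ∑ j, v j ^ 2 := by
        rw [Finset.mul_sum]
        refine Finset.sum_congr rfl fun j _ => ?_
        have := (p0 j).ne'
        field_simp
        try norm_num
end

section
/- Let U be an integrable real random variable, let L > 0 and let m be a positive integer, and set q_i = i·L/m for i = 1, …, m. Then |E[U] − (Σ_{i=1}^{m} P(U ≥ q_i)·L/m − Σ_{i=1}^{m} P(U ≤ −q_i)·L/m)| ≤ 2L/m + ∫_L^∞ P(U ≥ q) dq + ∫_L^∞ P(U ≤ −q) dq. -/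
open scoped BigOperators
open MeasureTheory

/-- One-sided version. -/
lemma one_sided_aux {Ω : Type*} [MeasurableSpace Ω] (P : Measure Ω)
    [IsProbabilityMeasure P] (V : Ω → ℝ) (hV : Measurable V) (hInt : Integrable V P)
    (L : ℝ) (hL : 0 < L) (m : ℕ) (hm : 0 < m) :
    (∑ i ∈ Finset.Icc 1 m, (P {ω | (i : ℝ) * L / m ≤ V ω}).toReal * (L / m))
      ≤ (∫ ω, max (V ω) 0 ∂P) ∧
    (∫ ω, max (V ω) 0 ∂P) ≤
      (∑ i ∈ Finset.Icc 1 m, (P {ω | (i : ℝ) * L / m ≤ V ω}).toReal * (L / m)) + L / m +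
        ∫ q in Set.Ioi L, (P {ω | q ≤ V ω}).toReal := by
  set F : ℝ → ℝ := fun q => (P {ω | q ≤ V ω}).toReal with hF
  have hanti : Antitone F := fun a b hab =>
    ENNReal.toReal_mono (measure_ne_top _ _) (measure_mono fun ω (h : b ≤ V ω) => hab.trans h)
  have h0 : ∀ q, 0 ≤ F q := fun q => ENNReal.toReal_nonneg
  have h1 : ∀ q, F q ≤ 1 := fun q => ENNReal.toReal_le_of_le_ofReal zero_le_one (by
    simpa using prob_le_one)
  have hpos : Integrable (fun ω => max (V ω) 0) P := hInt.pos_part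
  have hset : ∀ q ∈ Set.Ioi (0:ℝ), P {ω | q ≤ max (V ω) 0} = P {ω | q ≤ V ω} := by
    intro q hq
    congr 1
    ext ω
    simp [not_le.mpr (Set.mem_Ioi.mp hq)]
  have hmain : (∫ ω, max (V ω) 0 ∂P) = ∫ q in Set.Ioi 0, F q := by
    rw [hpos.integral_eq_integral_meas_le (Filter.Eventually.of_forall fun ω => le_max_right _ _)]
    refine setIntegral_congr_fun measurableSet_Ioi fun q hq => ?_
    simp only [hF, measureReal_def, hset q hq]
  have hFi : IntegrableOn F (Set.Ioi 0) := by
    have hl := lintegral_eq_lintegral_meas_le P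
      (Filter.Eventually.of_forall fun ω => le_max_right (V ω) 0) hpos.aemeasurable
    rw [setLIntegral_congr_fun measurableSet_Ioi hset] at hl
    refine integrable_toReal_of_lintegral_ne_top ?_ ?_
    · have : Antitone fun q : ℝ => P {ω | q ≤ V ω} :=
        fun a b hab => measure_mono fun ω (h : b ≤ V ω) => hab.trans h
      exact this.measurable.aemeasurable
    · rw [← hl]
      exact hpos.lintegral_lt_top.ne
  have hsplit : (∫ q in Set.Ioi 0, F q) = (∫ q in (0:ℝ)..L, F q) + ∫ q in Set.Ioi L, F q := by
    rw [intervalIntegral.integral_of_le hL.le, ← setIntegral_union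
      (Set.Ioc_disjoint_Ioi le_rfl) measurableSet_Ioi
      (hFi.mono_set Set.Ioc_subset_Ioi_self) (hFi.mono_set (Set.Ioi_subset_Ioi hL.le)),
      Set.Ioc_union_Ioi_eq_Ioi hL.le]
  have htail : 0 ≤ ∫ q in Set.Ioi L, F q := integral_nonneg h0
  have hm' : (0:ℝ) < m := by exact_mod_cast hm
  have hd : 0 < L / m := by positivity
  have hga : Antitone (fun x : ℝ => F (x * (L / m))) := fun a b hab =>
    hanti (mul_le_mul_of_nonneg_right hab hd.le)
  have hscale : (∫ q in (0:ℝ)..L, F q) = (∫ x in (0:ℝ)..0 + m, F (x * (L / m))) * (L / m) := by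
    rw [intervalIntegral.integral_comp_mul_right _ hd.ne']
    have : (m : ℝ) * (L / m) = L := by field_simp
    simp only [zero_mul, zero_add, this, smul_eq_mul]
    field_simp
  have hA := AntitoneOn.sum_le_integral (x₀ := 0) (a := m) (hga.antitoneOn _)
  have hB := AntitoneOn.integral_le_sum (x₀ := 0) (a := m) (hga.antitoneOn _)
  have hS : (∑ i ∈ Finset.Icc 1 m, F ((i : ℝ) * L / m) * (L / m)) =
      (∑ i ∈ Finset.range m, F ((0 + ((i + 1 : ℕ) : ℝ)) * (L / m))) * (L / m) := by
    rw [Finset.sum_mul, Finset.range_eq_Ico, Finset.sum_Ico_add' 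
      (fun i : ℕ => F ((0 + (i : ℝ)) * (L / m)) * (L / m)) 0 m 1]
    refine Finset.sum_congr (by ext; simp) fun i _ => ?_
    rw [zero_add, mul_div_assoc]
  have hT : (∑ i ∈ Finset.range m, F ((0 + (i : ℝ)) * (L / m))) ≤
      (∑ i ∈ Finset.range m, F ((0 + ((i + 1 : ℕ) : ℝ)) * (L / m))) + 1 := by
    have e1 := Finset.sum_range_succ (fun i : ℕ => F ((0 + (i : ℝ)) * (L / m))) m
    have e2 := Finset.sum_range_succ' (fun i : ℕ => F ((0 + (i : ℝ)) * (L / m))) m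
    have := h0 ((0 + (m : ℝ)) * (L / m))
    have := h1 ((0 + ((0 : ℕ) : ℝ)) * (L / m))
    linarith
  change (∑ i ∈ Finset.Icc 1 m, F ((i : ℝ) * L / m) * (L / m)) ≤ _ ∧
    _ ≤ (∑ i ∈ Finset.Icc 1 m, F ((i : ℝ) * L / m) * (L / m)) + _ + ∫ q in Set.Ioi L, F q
  rw [hmain, hsplit, hS, hscale]
  have k1 := mul_le_mul_of_nonneg_right hA hd.le
  have k2 := mul_le_mul_of_nonneg_right (hB.trans hT) hd.le
  constructor <;> linarith

/-- Truncated Riemann-sum approximation of the mean via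
`E[U] = ∫₀^∞ P(U ≥ q) dq − ∫₀^∞ P(U ≤ −q) dq`: the right Riemann sums on the grid
`qᵢ = i·L/m` approximate `E[U]` up to `2L/m` plus the two tail integrals beyond `L`. -/
theorem mean_riemann_sum_approx (Ω : Type*) [MeasurableSpace Ω] (P : Measure Ω)
    [IsProbabilityMeasure P] (U : Ω → ℝ) (hU : Measurable U) (hInt : Integrable U P)
    (L : ℝ) (hL : 0 < L) (m : ℕ) (hm : 0 < m) :
    |(∫ ω, U ω ∂P) -
        ((∑ i ∈ Finset.Icc 1 m, (P {ω | (i : ℝ) * L / m ≤ U ω}).toReal * (L / m)) -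
          ∑ i ∈ Finset.Icc 1 m, (P {ω | U ω ≤ -((i : ℝ) * L / m)}).toReal * (L / m))| ≤
      2 * L / m +
        (∫ q in Set.Ioi L, (P {ω | q ≤ U ω}).toReal) +
        (∫ q in Set.Ioi L, (P {ω | U ω ≤ -q}).toReal) := by
  obtain ⟨a1, a2⟩ := one_sided_aux P U hU hInt L hL m hm
  obtain ⟨b1, b2⟩ := one_sided_aux P (fun ω => -U ω) hU.neg hInt.neg L hL m hm
  simp only [le_neg (b := U _)] at b1 b2
  have hE : (∫ ω, U ω ∂P) = (∫ ω, max (U ω) 0 ∂P) - ∫ ω, max (-U ω) 0 ∂P := by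
    rw [← integral_sub hInt.pos_part hInt.neg_part]
    refine integral_congr_ae (Filter.Eventually.of_forall fun ω => ?_)
    change U ω = max (U ω) 0 - max (-U ω) 0
    rcases le_total 0 (U ω) with h | h
    · rw [max_eq_left h, max_eq_right (by linarith)]; ring
    · rw [max_eq_right h, max_eq_left (by linarith)]; ring
  have hd : 0 < L / m := by positivity
  have t1 : 0 ≤ ∫ q in Set.Ioi L, (P {ω | q ≤ U ω}).toReal :=
    integral_nonneg fun _ => ENNReal.toReal_nonneg
  have t2 : 0 ≤ ∫ q in Set.Ioi L, (P {ω | U ω ≤ -q}).toReal :=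
    integral_nonneg fun _ => ENNReal.toReal_nonneg
  rw [hE, mul_div_assoc, abs_le]
  constructor <;> linarith
end
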